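/- The function f fails the Ambrosetti–Rabinowitz condition: for every z ∈ closure(Ω) and every β > p_+ one has f(z,x)x − β F(z,x) → −∞ as x → +∞. In particular, there exist no constants β > p_+ and M ≥ 1 such that 0 < β F(z,x) ≤ f(z,x)x for all z ∈ closure(Ω) and all |x| ≥ M. -/

import Mathlib

open MeasureTheory Filter intervalIntegral

open Asymptotics

/-!
For `r > 0` and `f x ~ x ^ (r - 1) * log x` as `x → ∞`, integrating the equivalence gives
`F x = ∫₀ˣ f ~ x ^ r * log x / r`, so `f x * x ~ r * F x` with `F x → ∞`, and therefore
`f x * x - β * F x ~ (r - β) * F x → -∞` as soon as `β > r`. The logarithm makes `f` grow faster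
than `x ^ (r - 1)`, but not by a power. The behaviour of `f` near `0` only enters through
integrability.
-/

section IntegralAsymptotics

variable {E : Type*} [NormedAddCommGroup E] [NormedSpace ℝ E] {w : ℝ → E} {u v V : ℝ → ℝ} {a b : ℝ}

lemma intervalIntegrable_of_hasDerivAt_of_nonneg (hab : a ≤ b)
    (hV : ∀ s ∈ Set.Icc a b, HasDerivAt V (v s) s) (hv : ∀ s ∈ Set.Icc a b, 0 ≤ v s) :
    IntervalIntegrable v volume a b := by
  refine intervalIntegrable_deriv_of_nonneg (g := V) ?_ (fun s hs ↦ ?_) (fun s hs ↦ ?_)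
  · rw [Set.uIcc_of_le hab]
    exact fun s hs ↦ (hV s hs).continuousAt.continuousWithinAt
  all_goals rw [min_eq_left hab, max_eq_right hab] at hs
  · exact hV s (Set.Ioo_subset_Icc_self hs)
  · exact hv s (Set.Ioo_subset_Icc_self hs)

lemma norm_integral_le_sub_of_norm_le_deriv (hab : a ≤ b)
    (hV : ∀ s ∈ Set.Icc a b, HasDerivAt V (v s) s) (hwv : ∀ s ∈ Set.Icc a b, ‖w s‖ ≤ v s) :
    ‖∫ s in a..b, w s‖ ≤ V b - V a := by
  have hvint : IntervalIntegrable v volume a b :=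
    intervalIntegrable_of_hasDerivAt_of_nonneg hab hV fun s hs ↦
      (norm_nonneg _).trans (hwv s hs)
  calc ‖∫ s in a..b, w s‖
      ≤ ∫ s in a..b, v s :=
        norm_integral_le_of_norm_le hab
          (ae_of_all _ fun s hs ↦ hwv s (Set.Ioc_subset_Icc_self hs)) hvint
    _ = V b - V a :=
        integral_eq_sub_of_hasDerivAt (fun s hs ↦ hV s (by rwa [Set.uIcc_of_le hab] at hs)) hvint

lemma isLittleO_integral_of_tendsto_atTop (hw : ∀ x ≥ a, IntervalIntegrable w volume a x)
    (hwv : w =o[atTop] v) (hv : ∀ᶠ x in atTop, 0 ≤ v x)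
    (hV : ∀ᶠ x in atTop, HasDerivAt V (v x) x) (hVtop : Tendsto V atTop atTop) :
    (fun x ↦ ∫ s in a..x, w s) =o[atTop] V := by
  rw [isLittleO_iff]
  intro ε hε
  obtain ⟨b, hab, hb⟩ : ∃ b ≥ a, ∀ s ≥ b, ‖w s‖ ≤ ε / 2 * v s ∧ HasDerivAt V (v s) s := by
    have hnorm : ∀ᶠ s in atTop, ‖w s‖ ≤ ε / 2 * v s := by
      filter_upwards [isLittleO_iff.1 hwv (half_pos hε), hv] with s hs hvs
      rwa [Real.norm_of_nonneg hvs] at hs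
    exact ((eventually_ge_atTop a).and (eventually_forall_ge_atTop.2 (hnorm.and hV))).exists
  filter_upwards [eventually_ge_atTop b, hVtop.eventually_ge_atTop 0,
    hVtop.eventually_ge_atTop (2 / ε * ‖∫ s in a..b, w s‖ - V b)] with x hbx hVx hx
  have hhead : ‖∫ s in a..b, w s‖ ≤ ε / 2 * (V x + V b) := by
    have := mul_le_mul_of_nonneg_left hx (half_pos hε).le
    field_simp at this ⊢
    linarith
  have htail : ‖∫ s in b..x, w s‖ ≤ ε / 2 * V x - ε / 2 * V b :=
    norm_integral_le_sub_of_norm_le_deriv hbx (fun s hs ↦ (hb s hs.1).2.const_mul (ε / 2))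
      fun s hs ↦ (hb s hs.1).1
  calc ‖∫ s in a..x, w s‖
      = ‖(∫ s in a..b, w s) + ∫ s in b..x, w s‖ := by
        rw [integral_add_adjacent_intervals (hw b hab)
          ((hw b hab).symm.trans (hw x (hab.trans hbx)))]
    _ ≤ ε / 2 * (V x + V b) + (ε / 2 * V x - ε / 2 * V b) := norm_add_le_of_le hhead htail
    _ = ε * ‖V x‖ := by rw [Real.norm_of_nonneg hVx]; ring

lemma isEquivalent_integral_of_tendsto_atTop (hu : ∀ x ≥ a, IntervalIntegrable u volume a x)
    (huv : u ~[atTop] v) (hv : ∀ᶠ x in atTop, 0 ≤ v x)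
    (hV : ∀ᶠ x in atTop, HasDerivAt V (v x) x) (hVtop : Tendsto V atTop atTop) :
    (fun x ↦ ∫ s in a..x, u s) ~[atTop] V := by
  obtain ⟨b, hab, hb⟩ : ∃ b ≥ a, ∀ s ≥ b, 0 ≤ v s ∧ HasDerivAt V (v s) s :=
    ((eventually_ge_atTop a).and (eventually_forall_ge_atTop.2 (hv.and hV))).exists
  have hub (x : ℝ) (hbx : x ≥ b) : IntervalIntegrable u volume b x :=
    (hu b hab).symm.trans (hu x (hab.trans hbx))
  have hvb (x : ℝ) (hbx : x ≥ b) : IntervalIntegrable v volume b x :=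
    intervalIntegrable_of_hasDerivAt_of_nonneg hbx (fun s hs ↦ (hb s hs.1).2)
      fun s hs ↦ (hb s hs.1).1
  have herror : (fun x ↦ ∫ s in b..x, (u - v) s) =o[atTop] V :=
    isLittleO_integral_of_tendsto_atTop (fun x hx ↦ (hub x hx).sub (hvb x hx))
      huv.isLittleO hv hV hVtop
  have hconst : (fun _ ↦ (∫ s in a..b, u s) - V b) =o[atTop] V :=
    isLittleO_const_left.2 (.inr (tendsto_norm_atTop_atTop.comp hVtop))
  refine (hconst.add herror).congr' ?_ .rfl
  filter_upwards [eventually_ge_atTop b] with x hbx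
  have hsub : ∫ s in b..x, (u - v) s = (∫ s in b..x, u s) - ∫ s in b..x, v s :=
    integral_sub (hub x hbx) (hvb x hbx)
  have hftc : ∫ s in b..x, v s = V x - V b :=
    integral_eq_sub_of_hasDerivAt
      (fun s hs ↦ (hb s (by rw [Set.uIcc_of_le hbx] at hs; exact hs.1)).2) (hvb x hbx)
  rw [Pi.sub_apply, ← integral_add_adjacent_intervals (hu b hab) (hub x hbx), hsub, hftc]
  ring

end IntegralAsymptotics

lemma tendsto_sub_mul_atBot_of_isEquivalent {α : Type*} {l : Filter α} {u F : α → ℝ}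
    {r β : ℝ} (huF : u ~[l] fun x ↦ r * F x) (hF : Tendsto F l atTop) (hβ : r < β) :
    Tendsto (fun x ↦ u x - β * F x) l atBot := by
  have hsub : (fun x ↦ u x - β * F x) ~[l] fun x ↦ (r - β) * F x := by
    have herror : (u - fun x ↦ r * F x) =o[l] fun x ↦ (r - β) * F x :=
      (huF.isLittleO.trans_isBigO (isBigO_const_mul_self r F l)).const_mul_right
        (sub_ne_zero.2 hβ.ne)
    refine herror.congr_left fun x ↦ ?_
    simp only [Pi.sub_apply]
    ring
  exact hsub.symm.tendsto_atBot (hF.const_mul_atTop_of_neg (sub_neg.2 hβ))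

section RpowMulLog

variable {p q r : ℝ}

lemma isLittleO_rpow_rpow_mul_log_atTop (hpq : p ≤ q) :
    (fun x : ℝ ↦ x ^ p) =o[atTop] fun x ↦ x ^ q * Real.log x := by
  have hle : (fun x : ℝ ↦ x ^ p) =O[atTop] fun x ↦ x ^ q := by
    refine .of_norm_eventuallyLE ?_
    filter_upwards [eventually_ge_atTop 1] with x hx
    rw [Real.norm_of_nonneg (Real.rpow_nonneg (zero_le_one.trans hx) p)]
    exact Real.rpow_le_rpow_of_exponent_le hx hpq
  simpa only [mul_one] using hle.mul_isLittleO (Real.isLittleO_const_log_atTop (c := 1))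

lemma tendsto_rpow_mul_log_atTop (hr : 0 < r) :
    Tendsto (fun x : ℝ ↦ x ^ r * Real.log x) atTop atTop :=
  (tendsto_rpow_atTop hr).atTop_mul_atTop₀ Real.tendsto_log_atTop

lemma hasDerivAt_rpow_mul_log_div_sub (hr : r ≠ 0) {x : ℝ} (hx : x ≠ 0) :
    HasDerivAt (fun s : ℝ ↦ s ^ r * Real.log s / r - s ^ r / r ^ 2)
      (x ^ (r - 1) * Real.log x) x := by
  have hpow := Real.hasDerivAt_rpow_const (p := r) (.inl hx)
  refine (((hpow.mul (Real.hasDerivAt_log hx)).div_const r).sub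
    (hpow.div_const (r ^ 2))).congr_deriv ?_
  rw [Real.rpow_sub_one hx]
  field_simp
  ring

lemma isEquivalent_rpow_mul_log_div_sub (hr : r ≠ 0) :
    (fun x : ℝ ↦ x ^ r * Real.log x / r - x ^ r / r ^ 2) ~[atTop]
      fun x ↦ x ^ r * Real.log x / r := by
  refine IsEquivalent.refl.sub_isLittleO ?_
  simp only [div_eq_inv_mul]
  exact ((isLittleO_rpow_rpow_mul_log_atTop le_rfl).const_mul_left _).const_mul_right
    (inv_ne_zero hr)

variable {f : ℝ → ℝ} {a : ℝ}

lemma isEquivalent_integral_of_isEquivalent_rpow_mul_log (hr : 0 < r)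
    (hfi : ∀ x ≥ a, IntervalIntegrable f volume a x)
    (hf : f ~[atTop] fun x ↦ x ^ (r - 1) * Real.log x) :
    (fun x ↦ ∫ s in a..x, f s) ~[atTop] fun x ↦ x ^ r * Real.log x / r := by
  have hV := isEquivalent_rpow_mul_log_div_sub hr.ne'
  refine (isEquivalent_integral_of_tendsto_atTop hfi hf ?_ ?_ ?_).trans hV
  · filter_upwards [eventually_ge_atTop 1] with x hx
    exact mul_nonneg (Real.rpow_nonneg (zero_le_one.trans hx) _) (Real.log_nonneg hx)
  · filter_upwards [eventually_ne_atTop 0] with x hx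
    exact hasDerivAt_rpow_mul_log_div_sub hr.ne' hx
  · exact hV.symm.tendsto_atTop ((tendsto_rpow_mul_log_atTop hr).atTop_div_const hr)

lemma tendsto_mul_id_sub_mul_integral_atBot {β : ℝ} (hr : 0 < r) (hβ : r < β)
    (hfi : ∀ x ≥ a, IntervalIntegrable f volume a x)
    (hf : f ~[atTop] fun x ↦ x ^ (r - 1) * Real.log x) :
    Tendsto (fun x ↦ f x * x - β * ∫ s in a..x, f s) atTop atBot := by
  have hF := isEquivalent_integral_of_isEquivalent_rpow_mul_log hr hfi hf
  have hFtop : Tendsto (fun x ↦ ∫ s in a..x, f s) atTop atTop :=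
    hF.symm.tendsto_atTop ((tendsto_rpow_mul_log_atTop hr).atTop_div_const hr)
  have hfx : (fun x ↦ f x * x) ~[atTop] fun x ↦ x ^ r * Real.log x := by
    refine (hf.mul (IsEquivalent.refl (u := id))).congr_right ?_
    filter_upwards [eventually_ne_atTop 0] with x hx
    simp only [Pi.mul_apply, id, Real.rpow_sub_one hx]
    field_simp
  have hrF : (fun x ↦ r * ∫ s in a..x, f s) ~[atTop] fun x ↦ x ^ r * Real.log x := by
    refine ((IsEquivalent.refl (u := fun _ ↦ r)).mul hF).congr_right (.of_forall fun x ↦ ?_)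
    simp only [Pi.mul_apply]
    field_simp
  exact tendsto_sub_mul_atBot_of_isEquivalent (hfx.trans hrF.symm) hFtop hβ

end RpowMulLog

/-- The reaction term `f(z, ·)` of the theorem, at a point where the variable exponent takes the
value `q` and with `P` in the role of `p₊`. The value at `0` need not be prescribed: the first
branch gives `0` there. -/
noncomputable def logReaction (θ P q x : ℝ) : ℝ :=
  if |x| ≤ 1 then (|x| ^ (θ - 2) - 1) * x
  else |x| ^ (P - 2) * x * Real.log |x| + (|x| ^ (q - 2) - 1) * x

namespace logReaction

variable {θ P q x : ℝ}

lemma eq_of_mem_Ioc (hx : x ∈ Set.Ioc 0 1) : logReaction θ P q x = x ^ (θ - 1) - x := by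
  have hθ : x ^ (θ - 1) = x ^ (θ - 2) * x := by
    rw [← Real.rpow_add_one hx.1.ne']
    ring_nf
  rw [logReaction, abs_of_pos hx.1, if_pos hx.2, hθ]
  ring

lemma eq_of_one_le (hx : 1 ≤ x) :
    logReaction θ P q x = x ^ (P - 1) * Real.log x + (x ^ (q - 1) - x) := by
  obtain rfl | hx1 := hx.eq_or_lt
  · simp [logReaction]
  have hx0 : 0 < x := zero_lt_one.trans hx1
  have hpow (t : ℝ) : x ^ (t - 1) = x ^ (t - 2) * x := by
    rw [← Real.rpow_add_one hx0.ne']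
    ring_nf
  rw [logReaction, abs_of_pos hx0, if_neg hx1.not_ge, hpow P, hpow q]
  ring

lemma intervalIntegrable (hθ : 0 < θ) (hx : 0 ≤ x) :
    IntervalIntegrable (logReaction θ P q) volume 0 x := by
  have hnear : IntervalIntegrable (logReaction θ P q) volume 0 1 := by
    refine ((intervalIntegrable_rpow' (r := θ - 1) (by linarith)).sub intervalIntegrable_id).congr
      fun s hs ↦ ?_
    rw [Set.uIoc_of_le zero_le_one] at hs
    exact (eq_of_mem_Ioc hs).symm
  have hfar : ContinuousOn (logReaction θ P q) (Set.Ici 1) := by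
    refine ContinuousOn.congr (fun s hs ↦ ?_) fun s hs ↦ eq_of_one_le hs
    have hs0 : s ≠ 0 := (zero_lt_one.trans_le hs).ne'
    have hpow (t : ℝ) := Real.continuousAt_rpow_const s t (.inl hs0)
    exact (((hpow _).mul (Real.continuousAt_log hs0)).add
      ((hpow _).sub continuousAt_id)).continuousWithinAt
  obtain hx1 | hx1 := le_total x 1
  · exact hnear.mono_set (Set.uIcc_subset_uIcc_left ⟨by simpa using hx, by simpa using hx1⟩)
  · exact hnear.trans
      ((hfar.mono Set.Icc_subset_Ici_self).intervalIntegrable_of_Icc hx1)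

lemma isEquivalent_rpow_mul_log (hP : 2 ≤ P) (hq : q ≤ P) :
    logReaction θ P q ~[atTop] fun x ↦ x ^ (P - 1) * Real.log x := by
  have hpow : (fun x : ℝ ↦ x ^ (q - 1)) =o[atTop] fun x ↦ x ^ (P - 1) * Real.log x :=
    isLittleO_rpow_rpow_mul_log_atTop (by linarith)
  have hid : (fun x : ℝ ↦ x) =o[atTop] fun x ↦ x ^ (P - 1) * Real.log x := by
    simpa only [Real.rpow_one] using
      isLittleO_rpow_rpow_mul_log_atTop (p := 1) (q := P - 1) (by linarith)
  refine (IsEquivalent.refl.add_isLittleO (hpow.sub hid)).congr_left ?_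
  filter_upwards [eventually_ge_atTop 1] with x hx
  exact (eq_of_one_le hx).symm

end logReaction

theorem fails_Ambrosetti_Rabinowitz_general {X : Type*} {S : Set X} (hS : S.Nonempty)
    {r : ℝ} (hr : 0 < r) {f : X → ℝ → ℝ}
    (hfi : ∀ z ∈ S, ∀ x ≥ 0, IntervalIntegrable (f z) volume 0 x)
    (hf : ∀ z ∈ S, f z ~[atTop] fun x ↦ x ^ (r - 1) * Real.log x) :
    (∀ z ∈ S, ∀ β : ℝ, r < β →
      Tendsto (fun x : ℝ ↦ f z x * x - β * ∫ s in (0:ℝ)..x, f z s) atTop atBot) ∧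
    ¬ ∃ β : ℝ, r < β ∧ ∃ M : ℝ, 1 ≤ M ∧ ∀ z ∈ S, ∀ x : ℝ, M ≤ |x| →
        0 < β * (∫ s in (0:ℝ)..x, f z s) ∧
          β * (∫ s in (0:ℝ)..x, f z s) ≤ f z x * x := by
  have hlim : ∀ z ∈ S, ∀ β : ℝ, r < β →
      Tendsto (fun x : ℝ ↦ f z x * x - β * ∫ s in (0:ℝ)..x, f z s) atTop atBot :=
    fun z hz β hβ ↦ tendsto_mul_id_sub_mul_integral_atBot hr hβ (hfi z hz) (hf z hz)
  refine ⟨hlim, ?_⟩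
  rintro ⟨β, hβ, M, -, hAR⟩
  obtain ⟨z, hz⟩ := hS
  obtain ⟨x, hneg, hMx⟩ :=
    ((hlim z hz β hβ).eventually_lt_atBot 0 |>.and (eventually_ge_atTop M)).exists
  linarith [(hAR z hz x (hMx.trans (le_abs_self x))).2]

theorem fails_Ambrosetti_Rabinowitz
    {N : ℕ} (hN : 1 ≤ N) (Ω : Set (Fin N → ℝ)) (hΩne : Ω.Nonempty) (hΩop : IsOpen Ω)
    (hΩbd : Bornology.IsBounded Ω)
    (θ : ℝ) (hθ1 : 1 < θ) (hθ2 : θ < 2)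
    (p : (Fin N → ℝ) → ℝ) (hpc : ContinuousOn p (closure Ω))
    (pm pp : ℝ) (hpm : IsLeast (p '' closure Ω) pm) (hpp : IsGreatest (p '' closure Ω) pp)
    (hpm2 : 2 < pm)
    (f : (Fin N → ℝ) → ℝ → ℝ)
    (hf0 : ∀ z, f z 0 = 0)
    (hfsmall : ∀ z, ∀ x : ℝ, x ≠ 0 → |x| ≤ 1 → f z x = (|x| ^ (θ - 2) - 1) * x)
    (hfbig : ∀ z, ∀ x : ℝ, 1 < |x| →
      f z x = |x| ^ (pp - 2) * x * Real.log |x| + (|x| ^ (p z - 2) - 1) * x) :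
    (∀ z ∈ closure Ω, ∀ β : ℝ, pp < β →
      Tendsto (fun x : ℝ => f z x * x - β * ∫ s in (0:ℝ)..x, f z s) atTop atBot) ∧
    ¬ ∃ β : ℝ, pp < β ∧ ∃ M : ℝ, 1 ≤ M ∧ ∀ z ∈ closure Ω, ∀ x : ℝ, M ≤ |x| →
        0 < β * (∫ s in (0:ℝ)..x, f z s) ∧
          β * (∫ s in (0:ℝ)..x, f z s) ≤ f z x * x := by
  obtain rfl : f = fun z ↦ logReaction θ pp (p z) := by
    funext z x
    obtain rfl | hx := eq_or_ne x 0
    · simp [logReaction, hf0]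
    · rw [logReaction]
      split_ifs with h
      exacts [hfsmall z x hx h, hfbig z x (not_le.1 h)]
  have hpp2 : 2 < pp := hpm2.trans_le (hpp.2 hpm.1)
  exact fails_Ambrosetti_Rabinowitz_general hΩne.closure (by linarith)
    (fun _ _ _ ↦ logReaction.intervalIntegrable (by linarith))
    fun z hz ↦ logReaction.isEquivalent_rpow_mul_log hpp2.le (hpp.2 ⟨z, hz, rfl⟩)
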